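/- Let G be a non-bipartite graph of order n ≥ 21. If ρ(G) ≥ ρ(K_{⌈(n−2)/2⌉,⌊(n−2)/2⌋} • K₃), then G contains a cycle of length 5, unless G is isomorphic to K_{⌈(n−2)/2⌉,⌊(n−2)/2⌋} • K₃. -/

import Mathlib

open SimpleGraph

noncomputable def specRad {V : Type*} [Fintype V] [DecidableEq V] (G : SimpleGraph V) : ℝ :=
  letI := Classical.decRel G.Adj
  have h : (G.adjMatrix ℝ).IsHermitian := by
    ext i j
    simp [Matrix.conjTranspose_apply, SimpleGraph.adjMatrix_apply, G.adj_comm i j]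
  ⨆ i, h.eigenvalues i

/-- `K_{a,b} • K₃`: the complete bipartite graph `K_{a,b}` with a triangle glued at a
vertex of the part of size `b` (the part `Fin b`), using two new vertices `Fin 2`. -/
def KdotK3 (a b : ℕ) (hb : 0 < b) : SimpleGraph ((Fin a ⊕ Fin b) ⊕ Fin 2) :=
  SimpleGraph.fromRel (fun x y =>
    (∃ i j, x = Sum.inl (Sum.inl i) ∧ y = Sum.inl (Sum.inr j)) ∨
    (x = Sum.inl (Sum.inr ⟨0, hb⟩) ∧ y = Sum.inr 0) ∨
    (x = Sum.inl (Sum.inr ⟨0, hb⟩) ∧ y = Sum.inr 1) ∨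
    (x = Sum.inr 0 ∧ y = Sum.inr 1))

open Classical in
/-- nonnegative nonzero eigenvector of `G` for the value `r`. -/
def PV {V : Type*} [Fintype V] (G : SimpleGraph V) (r : ℝ) (x : V → ℝ) : Prop :=
  (∀ v, 0 ≤ x v) ∧ (∃ v, x v ≠ 0) ∧ ∀ v, ∑ w, (if G.Adj v w then x w else 0) = r * x v

open scoped MatrixOrder in
theorem herm_perron {V : Type*} [Fintype V] [DecidableEq V] [Nonempty V] (A : Matrix V V ℝ)
    (h : A.IsHermitian) (hA : ∀ i j, 0 ≤ A i j) :
    ∃ x : V → ℝ, (∀ v, 0 ≤ x v) ∧ (∃ v, x v ≠ 0) ∧ A.mulVec x = (⨆ i, h.eigenvalues i) • x := by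
  classical
  set r := ⨆ i, h.eigenvalues i with hr
  obtain ⟨i0, hi0⟩ : ∃ i, h.eigenvalues i = r := exists_eq_ciSup_of_finite
  have hle : ∀ i, h.eigenvalues i ≤ r := fun i => le_ciSup (Set.finite_range _).bddAbove i
  have hB : (algebraMap ℝ (Matrix V V ℝ) r - A).IsHermitian := by
    apply Matrix.IsHermitian.sub _ h
    rw [Matrix.algebraMap_eq_diagonal]
    exact Matrix.isHermitian_diagonal _
  have hps : (algebraMap ℝ (Matrix V V ℝ) r - A).PosSemidef := by
    rw [hB.posSemidef_iff_eigenvalues_nonneg]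
    intro i
    have := hB.eigenvalues_mem_spectrum_real i
    rw [← spectrum.singleton_sub_eq, h.spectrum_real_eq_range_eigenvalues] at this
    obtain ⟨a, ha, b, ⟨j, rfl⟩, hab⟩ := this
    simp only [Set.mem_singleton_iff] at ha
    subst ha
    have := hle j
    simp only [] at hab
    simp only [Pi.zero_apply]
    linarith
  have hmv : ∀ z : V → ℝ, (algebraMap ℝ (Matrix V V ℝ) r - A).mulVec z = r • z - A.mulVec z := by
    intro z
    rw [Matrix.sub_mulVec, Algebra.algebraMap_eq_smul_one, Matrix.smul_mulVec, Matrix.one_mulVec]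
  set z : V → ℝ := (h.eigenvectorBasis i0).ofLp with hz
  have hAz : A.mulVec z = r • z := by
    rw [← hi0]; exact h.mulVec_eigenvectorBasis i0
  have hz0 : ∃ v, z v ≠ 0 := by
    by_contra hc
    push Not at hc
    have h1 := h.eigenvectorBasis.orthonormal.ne_zero i0
    apply h1
    ext v
    exact hc v
  refine ⟨fun v => |z v|, fun v => abs_nonneg _, ?_, ?_⟩
  · obtain ⟨v, hv⟩ := hz0
    exact ⟨v, by simpa using hv⟩
  · have key := (hps.dotProduct_mulVec_zero_iff (fun v => |z v|)).1 ?_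
    · rw [hmv] at key
      exact (sub_eq_zero.1 key).symm
    · apply le_antisymm
      · rw [hmv]
        have e1 : ∑ i, z i * (A.mulVec z) i = ∑ i, z i * (r * z i) := by rw [hAz]; simp
        have e2 : ∑ i, z i * (A.mulVec z) i ≤ ∑ i, |z i| * (A.mulVec (fun v => |z v|)) i := by
          apply Finset.sum_le_sum
          intro i _
          refine (le_abs_self _).trans ?_
          rw [abs_mul]
          apply mul_le_mul_of_nonneg_left _ (abs_nonneg _)
          simp only [Matrix.mulVec, dotProduct]
          refine (Finset.abs_sum_le_sum_abs _ _).trans (le_of_eq ?_)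
          apply Finset.sum_congr rfl
          intro j _
          rw [abs_mul, abs_of_nonneg (hA i j)]
        have e3 : ∑ i, z i * (r * z i) = ∑ i, |z i| * (r * |z i|) := by
          apply Finset.sum_congr rfl
          intro i _
          have := abs_mul_abs_self (z i)
          linear_combination (-r) * this
        simp only [dotProduct, Pi.sub_apply, Pi.star_apply, star_trivial, Pi.smul_apply, smul_eq_mul, mul_sub, Finset.sum_sub_distrib]
        linarith
      · exact hps.dotProduct_mulVec_nonneg _

theorem perron_exists {V : Type*} [Fintype V] [DecidableEq V] [Nonempty V] (G : SimpleGraph V) :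
    ∃ x, PV G (specRad G) x := by
  classical
  let _ := Classical.decRel G.Adj
  have h : (G.adjMatrix ℝ).IsHermitian := by
    ext i j
    simp [Matrix.conjTranspose_apply, SimpleGraph.adjMatrix_apply, G.adj_comm i j]
  obtain ⟨x, h1, h2, h3⟩ := herm_perron (G.adjMatrix ℝ) h (by
    intro i j; rw [SimpleGraph.adjMatrix_apply]; split_ifs <;> norm_num)
  refine ⟨x, h1, h2, fun v => ?_⟩
  have := congrFun h3 v
  simp only [Matrix.mulVec, dotProduct, SimpleGraph.adjMatrix_apply, Pi.smul_apply, smul_eq_mul, ite_mul, one_mul, zero_mul] at this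
  unfold specRad
  convert this using 1

/-- Perron vectors of connected graphs are positive. -/
theorem PV.pos {V : Type*} [Fintype V] {G : SimpleGraph V} {r : ℝ} {x : V → ℝ} (h : PV G r x)
    (hc : G.Preconnected) (v : V) : 0 < x v := by
  classical
  obtain ⟨h1, ⟨v0, h2⟩, h3⟩ := h
  have step : ∀ a b, G.Adj a b → x a = 0 → x b = 0 := by
    intro a b hab ha
    have := h3 a
    rw [ha, mul_zero, Finset.sum_eq_zero_iff_of_nonneg] at this
    · simpa [hab] using this b (Finset.mem_univ _)
    · intro i _; split_ifs
      · exact h1 i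
      · exact le_rfl
  have walk : ∀ a b, G.Walk a b → x a = 0 → x b = 0 := by
    intro a b w
    induction w with
    | nil => exact id
    | cons hab _ ih => exact fun ha => ih (step _ _ hab ha)
  rcases (h1 v).lt_or_eq with hp | hp
  · exact hp
  · obtain ⟨w⟩ := hc v v0
    exact absurd (walk _ _ w hp.symm) h2

/-- Comparison of a graph with a connected supergraph. -/
theorem PV.compare {V W : Type*} [Fintype V] [Fintype W] {G : SimpleGraph V} {K : SimpleGraph W}
    {r s : ℝ} {x : V → ℝ} {y : W → ℝ} (hx : PV G r x) (hy : PV K s y) (hc : K.Preconnected)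
    (e : V ≃ W) (he : ∀ a b, G.Adj a b → K.Adj (e a) (e b)) :
    r ≤ s ∧ (r = s → ∀ a b, G.Adj a b ↔ K.Adj (e a) (e b)) := by
  classical
  have hyp := hy.pos hc
  obtain ⟨x1, ⟨v0, x2⟩, x3⟩ := id hx
  obtain ⟨y1, -, y3⟩ := hy
  have y3' : ∀ v, ∑ w, (if K.Adj (e v) (e w) then y (e w) else 0) = s * y (e v) := by
    intro v
    rw [← y3 (e v)]
    exact Equiv.sum_comp e (fun w => if K.Adj (e v) w then y w else 0)
  have hle : ∀ v w, (if G.Adj v w then x w else 0) ≤ (if K.Adj (e v) (e w) then x w else 0) := by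
    intro v w
    by_cases hg : G.Adj v w
    · simp [hg, he v w hg]
    · simp only [hg, if_false]
      split_ifs
      · exact x1 w
      · exact le_rfl
  have hle2 : ∀ v, r * x v ≤ ∑ w, (if K.Adj (e v) (e w) then x w else 0) := by
    intro v
    rw [← x3 v]
    exact Finset.sum_le_sum fun w _ => hle v w
  have hP : 0 < ∑ v, y (e v) * x v := by
    apply Finset.sum_pos'
    · intro v _; exact mul_nonneg (y1 _) (x1 _)
    · exact ⟨v0, Finset.mem_univ _, mul_pos (hyp _) (lt_of_le_of_ne (x1 _) (Ne.symm x2))⟩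
  have hK : ∑ v, y (e v) * ∑ w, (if K.Adj (e v) (e w) then x w else 0) = s * ∑ v, y (e v) * x v := by
    simp only [Finset.mul_sum]
    rw [Finset.sum_comm]
    apply Finset.sum_congr rfl
    intro w _
    rw [← mul_assoc, ← y3' w, Finset.sum_mul]
    apply Finset.sum_congr rfl
    intro v _
    simp only [K.adj_comm (e v) (e w)]
    split_ifs <;> ring
  have hG : ∑ v, y (e v) * (r * x v) = r * ∑ v, y (e v) * x v := by
    rw [Finset.mul_sum]
    exact Finset.sum_congr rfl fun v _ => by ring
  have hterm : ∀ v, y (e v) * (r * x v) ≤ y (e v) * ∑ w, (if K.Adj (e v) (e w) then x w else 0) :=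
    fun v => mul_le_mul_of_nonneg_left (hle2 v) (y1 _)
  have hsum := Finset.sum_le_sum (s := Finset.univ) fun v _ => hterm v
  rw [hG, hK] at hsum
  refine ⟨le_of_mul_le_mul_right hsum hP, ?_⟩
  intro hrs
  have heq : ∀ v, r * x v = ∑ w, (if K.Adj (e v) (e w) then x w else 0) := by
    have h0 : ∑ v, y (e v) * (r * x v) = ∑ v, y (e v) * ∑ w, (if K.Adj (e v) (e w) then x w else 0) := by
      rw [hG, hK, hrs]
    rw [Finset.sum_eq_sum_iff_of_le (fun v _ => hterm v)] at h0
    intro v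
    exact mul_left_cancel₀ (hyp (e v)).ne' (h0 v (Finset.mem_univ _))
  have hxK : PV K r (x ∘ e.symm) := by
    refine ⟨fun v => x1 _, ⟨e v0, by simpa using x2⟩, fun v => ?_⟩
    have := heq (e.symm v)
    simp only [Equiv.apply_symm_apply] at this
    rw [Function.comp_apply, this, ← Equiv.sum_comp e]
    simp
  have hxp : ∀ v, 0 < x v := fun v => by simpa using hxK.pos hc (e v)
  intro a b
  refine ⟨he a b, fun hk => ?_⟩
  by_contra hg
  have h0 := heq a
  rw [← x3 a, Finset.sum_eq_sum_iff_of_le (fun w _ => hle a w)] at h0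
  have := h0 b (Finset.mem_univ _)
  simp only [hg, hk, if_true, if_false] at this
  exact (hxp b).ne this

theorem K_ll_lr {a b : ℕ} (hb : 0 < b) (i j) :
    (KdotK3 a b hb).Adj (Sum.inl (Sum.inl i)) (Sum.inl (Sum.inr j)) := by
  simp [KdotK3]
theorem K_lr_ll {a b : ℕ} (hb : 0 < b) (i j) :
    (KdotK3 a b hb).Adj (Sum.inl (Sum.inr j)) (Sum.inl (Sum.inl i)) := by
  simp [KdotK3]
theorem K_ll_ll {a b : ℕ} (hb : 0 < b) (i j) :
    ¬ (KdotK3 a b hb).Adj (Sum.inl (Sum.inl i)) (Sum.inl (Sum.inl j)) := by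
  simp [KdotK3]
theorem K_lr_lr {a b : ℕ} (hb : 0 < b) (i j) :
    ¬ (KdotK3 a b hb).Adj (Sum.inl (Sum.inr i)) (Sum.inl (Sum.inr j)) := by
  simp [KdotK3]
theorem K_ll_r {a b : ℕ} (hb : 0 < b) (i j) :
    ¬ (KdotK3 a b hb).Adj (Sum.inl (Sum.inl i)) (Sum.inr j) := by
  simp [KdotK3]
theorem K_r_ll {a b : ℕ} (hb : 0 < b) (i j) :
    ¬ (KdotK3 a b hb).Adj (Sum.inr j) (Sum.inl (Sum.inl i)) := by
  simp [KdotK3]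
theorem K_lr_r {a b : ℕ} (hb : 0 < b) (i j) :
    (KdotK3 a b hb).Adj (Sum.inl (Sum.inr i)) (Sum.inr j) ↔ i = ⟨0, hb⟩ := by
  fin_cases j <;> simp [KdotK3]
theorem K_r_lr {a b : ℕ} (hb : 0 < b) (i j) :
    (KdotK3 a b hb).Adj (Sum.inr j) (Sum.inl (Sum.inr i)) ↔ i = ⟨0, hb⟩ := by
  rw [SimpleGraph.adj_comm]; exact K_lr_r hb i j
theorem K_r_r {a b : ℕ} (hb : 0 < b) (i j) :
    (KdotK3 a b hb).Adj (Sum.inr i) (Sum.inr j) ↔ i ≠ j := by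
  fin_cases i <;> fin_cases j <;> simp [KdotK3]

theorem K_conn {a b : ℕ} (ha : 0 < a) (hb : 0 < b) : (KdotK3 a b hb).Preconnected := by
  have h0 : ∀ v, (KdotK3 a b hb).Reachable v (Sum.inl (Sum.inr ⟨0, hb⟩)) := by
    rintro ((i | j) | k)
    · exact (K_ll_lr hb _ _).reachable
    · exact (K_lr_ll hb ⟨0, ha⟩ j).reachable.trans (K_ll_lr hb _ _).reachable
    · exact ((K_r_lr hb _ _).2 rfl).reachable
  exact fun u v => (h0 u).trans (h0 v).symm

theorem K_eq {a b : ℕ} (ha : 0 < a) (hb : 0 < b) {r : ℝ} {y} (hy : PV (KdotK3 a b hb) r y) :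
    0 < r ∧ (a * b : ℝ) < r ^ 2 ∧ (r ^ 2 - a * b) * ((r - 2) * (r + 1)) = 2 * a := by
  classical
  have hp := hy.pos (K_conn ha hb)
  obtain ⟨-, -, h3⟩ := hy
  set S := ∑ i : Fin a, y (Sum.inl (Sum.inl i)) with hS
  set R := ∑ i : Fin b, y (Sum.inl (Sum.inr i)) with hR
  set g := y (Sum.inl (Sum.inr ⟨0, hb⟩)) with hg
  set p := y (Sum.inr 0) with hpp
  set q := y (Sum.inr 1) with hq
  have e1 : ∀ i, R = r * y (Sum.inl (Sum.inl i)) := by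
    intro i
    have := h3 (Sum.inl (Sum.inl i))
    simpa [Fintype.sum_sum_type, K_ll_lr, K_ll_ll, K_ll_r] using this
  have e2 : ∀ j, S + (if j = ⟨0, hb⟩ then p + q else 0) = r * y (Sum.inl (Sum.inr j)) := by
    intro j
    rw [← h3 (Sum.inl (Sum.inr j))]
    simp only [Fintype.sum_sum_type, K_lr_ll, K_lr_lr, K_lr_r, if_true, if_false, Finset.sum_const_zero, add_zero, Fin.sum_univ_two]
    split_ifs <;> first | rfl | simp [hS]
  have e3 : g + q = r * p := by
    rw [hpp, ← h3 (Sum.inr 0)]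
    simp [Fintype.sum_sum_type, K_r_ll, K_r_lr, K_r_r, hg, hq]
  have e4 : g + p = r * q := by
    rw [hq, ← h3 (Sum.inr 1)]
    simp [Fintype.sum_sum_type, K_r_ll, K_r_lr, K_r_r, hg, hpp]
  have f1 : a * R = r * S := by
    rw [hS, Finset.mul_sum _ _ r, ← Finset.sum_congr rfl (fun i _ => e1 i)]
    simp
  have f2 : b * S + (p + q) = r * R := by
    rw [hR, Finset.mul_sum _ _ r, ← Finset.sum_congr rfl (fun i _ => e2 i), Finset.sum_add_distrib]
    simp
  have f3 : S + (p + q) = r * g := by simpa using e2 ⟨0, hb⟩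
  have hp0 : 0 < p := hp _
  have hq0 : 0 < q := hp _
  have hg0 : 0 < g := hp _
  have hS0 : 0 < S := Finset.sum_pos (fun i _ => hp _) ⟨⟨0, ha⟩, Finset.mem_univ _⟩
  have hR0 : 0 < R := Finset.sum_pos (fun i _ => hp _) ⟨⟨0, hb⟩, Finset.mem_univ _⟩
  have ha' : (0 : ℝ) < a := by exact_mod_cast ha
  have hr : 0 < r := by
    by_contra hc
    push Not at hc
    nlinarith
  have hlt : (a * b : ℝ) < r ^ 2 := by
    have : (a * b : ℝ) * S < r ^ 2 * S := by nlinarith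
    exact lt_of_mul_lt_mul_right this hS0.le
  refine ⟨hr, hlt, ?_⟩
  have k1 : (r - 1) * (p + q) = 2 * g := by linarith
  have k2 : (r ^ 2 - a * b) * R = r * (p + q) := by
    linear_combination (-r) * f2 - b * f1
  have k3 : r * (r * g - (p + q)) = a * R := by linear_combination -f1 - r * f3
  -- (r-1) r (r g - (p+q)) = a (r-1) R
  have k4 : r * (r * (r - 1) - 2) * g = a * (r - 1) * R := by
    linear_combination (r - 1) * k3 + r * k1
  have k5 : (r ^ 2 - a * b) * R * (r - 1) = 2 * r * g := by
    linear_combination (r - 1) * k2 + r * k1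
  have hr1 : 0 < r - 1 := by
    by_contra hc
    push Not at hc
    nlinarith
  have : ((r ^ 2 - a * b) * ((r - 2) * (r + 1)) - 2 * a) * (R * (r - 1)) = 0 := by
    linear_combination (r - 2) * (r + 1) * k5 + 2 * k4
  rcases mul_eq_zero.1 this with h | h
  · linarith
  · exact absurd h (mul_pos hR0 hr1).ne'

/-- Among the graphs `K_{t,b} • K₃` the balanced one has the largest spectral radius. -/
theorem K_max {n t b : ℕ} (hn : 21 ≤ n) (ht : 0 < t) (hb : 0 < b) (hs : t + b + 2 = n)
    {r s : ℝ} {x y} (hx : PV (KdotK3 t b hb) r x)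
    (h0 : 0 < (n - 2) / 2) (hy : PV (KdotK3 ((n - 1) / 2) ((n - 2) / 2) h0) s y) (hsr : s ≤ r) :
    t = (n - 1) / 2 ∧ b = (n - 2) / 2 := by
  obtain ⟨r0, r1, r2⟩ := K_eq ht hb hx
  obtain ⟨s0, s1, s2⟩ := K_eq (by omega) h0 hy
  obtain ⟨A, hA⟩ : ∃ A, A = (n - 1) / 2 := ⟨_, rfl⟩
  obtain ⟨B, hB⟩ : ∃ B, B = (n - 2) / 2 := ⟨_, rfl⟩
  rw [← hA, ← hB] at s1 s2 ⊢
  have hAB : A = B ∨ A = B + 1 := by omega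
  have hABn : t + b = A + B := by omega
  have hB9 : 9 ≤ B := by omega
  have hB9' : (9 : ℝ) ≤ B := by exact_mod_cast hB9
  have hABR : (B : ℝ) ≤ A := by exact_mod_cast (by omega : B ≤ A)
  have hA1 : (A : ℝ) ≤ B + 1 := by exact_mod_cast (by omega : A ≤ B + 1)
  have sB : (B : ℝ) < s := by
    by_contra hc
    push Not at hc
    nlinarith
  have hr2 : s ^ 2 ≤ r ^ 2 := by nlinarith
  have hq : (s - 2) * (s + 1) ≤ (r - 2) * (r + 1) := by nlinarith
  have hq0 : 0 < (s - 2) * (s + 1) := by nlinarith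
  have hge : 2 * (A : ℝ) ≤ (r ^ 2 - A * B) * ((r - 2) * (r + 1)) := by
    rw [← s2]
    apply mul_le_mul (by linarith) hq hq0.le (by linarith)
  by_cases hcase : t = A
  · exact ⟨hcase, by omega⟩
  exfalso
  by_cases hcase2 : t = B
  · have hbA : b = A := by omega
    have : t < A := by omega
    have : (t : ℝ) < A := by exact_mod_cast this
    subst hcase2 hbA
    linarith [mul_comm (t : ℝ) b]
  · have hlt : t * b + 1 ≤ A * B := by
      rcases hAB with h | h
      · subst h
        rcases lt_or_gt_of_ne hcase with h | h
        · obtain ⟨k, rfl⟩ := Nat.exists_eq_add_of_lt h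
          have : b = t + 2 * (k + 1) := by omega
          subst this; nlinarith
        · obtain ⟨k, rfl⟩ := Nat.exists_eq_add_of_lt h
          have : A = b + k + 1 := by omega
          subst this; nlinarith
      · subst h
        rcases lt_or_gt_of_ne hcase with h | h
        · have : t < B := by omega
          obtain ⟨k, rfl⟩ := Nat.exists_eq_add_of_lt this
          have : b = t + 2 * (k + 1) + 1 := by omega
          subst this; nlinarith
        · obtain ⟨k, rfl⟩ := Nat.exists_eq_add_of_lt h
          have : B = b + k + 1 := by omega
          subst this; nlinarith
    have hlt' : (t * b + 1 : ℝ) ≤ A * B := by exact_mod_cast hlt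
    have htl : (t : ℝ) ≤ A + B := by exact_mod_cast (by omega : t ≤ A + B)
    have h1 : (r ^ 2 - A * B) * ((r - 2) * (r + 1)) + (r - 2) * (r + 1) ≤ 2 * t := by
      rw [← r2]
      nlinarith
    have h2 : 2 * (t : ℝ) ≤ 4 * B + 2 := by linarith
    nlinarith

open Classical in
/-- number of common neighbours of `u` and `w`. -/
noncomputable def cn {n : ℕ} (G : SimpleGraph (Fin n)) (u w : Fin n) : ℕ :=
  (Finset.univ.filter (fun v => G.Adj u v ∧ G.Adj w v)).card

theorem PV.sq_le {n : ℕ} {G : SimpleGraph (Fin n)} {r : ℝ} {x} (hx : PV G r x) :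
    ∃ u, r ^ 2 ≤ ((∑ w, cn G u w : ℕ) : ℝ) := by
  classical
  obtain ⟨x1, ⟨v0, x2⟩, x3⟩ := hx
  obtain ⟨u, -, hu⟩ := Finset.exists_max_image Finset.univ x ⟨v0, Finset.mem_univ _⟩
  have hu0 : 0 < x u := lt_of_lt_of_le (lt_of_le_of_ne (x1 v0) (Ne.symm x2)) (hu v0 (Finset.mem_univ _))
  refine ⟨u, le_of_mul_le_mul_right ?_ hu0⟩
  have h1 : r ^ 2 * x u = ∑ w, (cn G u w : ℝ) * x w := by
    have : r ^ 2 * x u = r * (r * x u) := by ring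
    rw [this, ← x3 u, Finset.mul_sum]
    have : ∀ v, r * (if G.Adj u v then x v else 0) =
        ∑ w, (if G.Adj u v ∧ G.Adj w v then x w else 0) := by
      intro v
      by_cases h : G.Adj u v
      · simp only [h, if_true, true_and]
        rw [← x3 v]
        simp only [G.adj_comm v]
      · simp [h]
    simp only [this]
    rw [Finset.sum_comm]
    apply Finset.sum_congr rfl
    intro w _
    rw [← Finset.sum_filter, Finset.sum_const, nsmul_eq_mul, cn]
  rw [h1, Nat.cast_sum, Finset.sum_mul]
  exact Finset.sum_le_sum fun w _ => mul_le_mul_of_nonneg_left (hu w (Finset.mem_univ _)) (Nat.cast_nonneg _)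

/-- The structure of a spanning subgraph of some `K_{t,b} • K₃`. -/
def Str {n : ℕ} (G : SimpleGraph (Fin n)) : Prop :=
  ∃ (T : Finset (Fin n)) (g p q : Fin n), T.Nonempty ∧ g ≠ p ∧ g ≠ q ∧ p ≠ q ∧
    g ∉ T ∧ p ∉ T ∧ q ∉ T ∧ ∀ v w, G.Adj v w →
      (v ∈ T ∧ w ∉ T ∧ w ≠ p ∧ w ≠ q) ∨ (w ∈ T ∧ v ∉ T ∧ v ≠ p ∧ v ≠ q) ∨
      ((v = g ∨ v = p ∨ v = q) ∧ (w = g ∨ w = p ∨ w = q))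

theorem Str.equiv {n : ℕ} {G : SimpleGraph (Fin n)} (h : Str G) :
    ∃ (t b : ℕ) (hb : 0 < b) (e : Fin n ≃ (Fin t ⊕ Fin b) ⊕ Fin 2), 0 < t ∧ t + b + 2 = n ∧
      ∀ v w, G.Adj v w → (KdotK3 t b hb).Adj (e v) (e w) := by
  classical
  obtain ⟨T, g, p, q, hT, hgp, hgq, hpq, gT, pT, qT, hE⟩ := h
  set B : Finset (Fin n) := Finset.univ \ (insert p (insert q T)) with hB
  have mB : ∀ v, v ∈ B ↔ v ∉ T ∧ v ≠ p ∧ v ≠ q := by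
    intro v; simp only [hB, Finset.mem_sdiff, Finset.mem_univ, true_and, Finset.mem_insert]; tauto
  have gB : g ∈ B := (mB g).2 ⟨gT, hgp, hgq⟩
  have hb : 0 < B.card := Finset.card_pos.2 ⟨g, gB⟩
  have hcard : T.card + B.card + 2 = n := by
    have h1 : (insert p (insert q T)).card = T.card + 2 := by
      rw [Finset.card_insert_of_notMem (by simp [hpq, pT]), Finset.card_insert_of_notMem qT]
    have h2 := Finset.card_sdiff_add_card_eq_card (Finset.subset_univ (insert p (insert q T)))
    rw [Finset.card_univ, Fintype.card_fin] at h2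
    rw [← hB] at h2
    omega
  let eT := T.equivFin
  let eB := B.equivFin.trans (Equiv.swap (B.equivFin ⟨g, gB⟩) ⟨0, hb⟩)
  have eBg : eB ⟨g, gB⟩ = ⟨0, hb⟩ := by simp [eB]
  let f : (Fin T.card ⊕ Fin B.card) ⊕ Fin 2 → Fin n :=
    Sum.elim (Sum.elim (fun i => (eT.symm i : Fin n)) (fun j => (eB.symm j : Fin n))) ![p, q]
  have hfT : ∀ i, f (Sum.inl (Sum.inl i)) ∈ T := fun i => (eT.symm i).2
  have hfB : ∀ i, f (Sum.inl (Sum.inr i)) ∈ B := fun i => (eB.symm i).2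
  have hf0 : f (Sum.inr 0) = p := rfl
  have hf1 : f (Sum.inr 1) = q := rfl
  have hinj : Function.Injective f := by
    rintro ((i | i) | i) ((j | j) | j) hij
    · have : eT.symm i = eT.symm j := Subtype.ext hij
      rw [eT.symm.injective this]
    · exact absurd (hij ▸ hfT i) ((mB _).1 (hfB j)).1
    · exfalso
      have := hfT i
      rw [hij] at this
      fin_cases j
      · exact pT this
      · exact qT this
    · exact absurd (hij ▸ hfT j) ((mB _).1 (hfB i)).1
    · have : eB.symm i = eB.symm j := Subtype.ext hij
      rw [eB.symm.injective this]
    · exfalso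
      have := (mB _).1 (hfB i)
      rw [hij] at this
      fin_cases j
      · exact this.2.1 rfl
      · exact this.2.2 rfl
    · exfalso
      have := hfT j
      rw [← hij] at this
      fin_cases i
      · exact pT this
      · exact qT this
    · exfalso
      have := (mB _).1 (hfB j)
      rw [← hij] at this
      fin_cases i
      · exact this.2.1 rfl
      · exact this.2.2 rfl
    · fin_cases i <;> fin_cases j
      · rfl
      · exact absurd hij hpq
      · exact absurd hij.symm hpq
      · rfl
  have hbij : Function.Bijective f := by
    rw [Fintype.bijective_iff_injective_and_card]
    refine ⟨hinj, ?_⟩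
    simp [hcard]
  let e := (Equiv.ofBijective f hbij).symm
  have he : ∀ x, e (f x) = x := fun x => (Equiv.ofBijective f hbij).symm_apply_apply x
  have eTv : ∀ v ∈ T, ∃ i, e v = Sum.inl (Sum.inl i) := by
    intro v hv
    refine ⟨eT ⟨v, hv⟩, ?_⟩
    rw [← he (Sum.inl (Sum.inl (eT ⟨v, hv⟩)))]
    congr 1
    simp [f]
  have eBv : ∀ v (hv : v ∈ B), e v = Sum.inl (Sum.inr (eB ⟨v, hv⟩)) := by
    intro v hv
    rw [← he (Sum.inl (Sum.inr (eB ⟨v, hv⟩)))]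
    congr 1
    simp only [f, Sum.elim_inl, Sum.elim_inr, Equiv.symm_apply_apply]
  have eg : e g = Sum.inl (Sum.inr ⟨0, hb⟩) := by rw [eBv g gB, eBg]
  have ep : e p = Sum.inr 0 := he (Sum.inr 0)
  have eq : e q = Sum.inr 1 := he (Sum.inr 1)
  refine ⟨T.card, B.card, hb, e, Finset.card_pos.2 hT, hcard, ?_⟩
  intro v w hvw
  have hne := hvw.ne
  rcases hE v w hvw with ⟨h1, h2⟩ | ⟨h1, h2⟩ | ⟨h1, h2⟩
  · obtain ⟨i, hi⟩ := eTv v h1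
    rw [hi, eBv w ((mB w).2 h2)]
    exact K_ll_lr hb _ _
  · obtain ⟨i, hi⟩ := eTv w h1
    rw [hi, eBv v ((mB v).2 h2)]
    exact K_lr_ll hb _ _
  · rcases h1 with rfl | rfl | rfl <;> rcases h2 with rfl | rfl | rfl <;>
      first
      | exact absurd rfl hne
      | simp [eg, ep, eq, K_lr_r, K_r_lr, K_r_r]

theorem Str.final {n : ℕ} (hn : 21 ≤ n) {G : SimpleGraph (Fin n)} (h : Str G)
    (h0 : 0 < (n - 2) / 2) (hρ : specRad (KdotK3 ((n - 1) / 2) ((n - 2) / 2) h0) ≤ specRad G) :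
    Nonempty (G ≃g KdotK3 ((n - 1) / 2) ((n - 2) / 2) h0) := by
  obtain ⟨t, b, hb, e, ht, hs, he⟩ := h.equiv
  have : Nonempty (Fin n) := ⟨⟨0, by omega⟩⟩
  have : Nonempty (Fin t) := ⟨⟨0, ht⟩⟩
  have : Nonempty (Fin ((n - 2) / 2)) := ⟨⟨0, h0⟩⟩
  obtain ⟨x, hx⟩ := perron_exists G
  obtain ⟨y, hy⟩ := perron_exists (KdotK3 t b hb)
  obtain ⟨z, hz⟩ := perron_exists (KdotK3 ((n - 1) / 2) ((n - 2) / 2) h0)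
  obtain ⟨c1, c2⟩ := hx.compare hy (K_conn ht hb) e he
  obtain ⟨rfl, rfl⟩ := K_max hn ht hb hs hy h0 hz (hρ.trans c1)
  have := c2 (le_antisymm c1 hρ)
  exact ⟨⟨e, fun {a b} => (this a b).symm⟩⟩


/-- no pentagon, in terms of vertices. -/
def No5 {n : ℕ} (G : SimpleGraph (Fin n)) : Prop :=
  ∀ a b c d e : Fin n, G.Adj a b → G.Adj b c → G.Adj c d → G.Adj d e → G.Adj e a →
    a ≠ c → a ≠ d → b ≠ d → b ≠ e → c ≠ e → False

theorem no5_of {n : ℕ} {G : SimpleGraph (Fin n)}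
    (h : ¬ ∃ (v : Fin n) (c : G.Walk v v), c.IsCycle ∧ c.length = 5) : No5 G := by
  intro a b c d e hab hbc hcd hde hea h1 h2 h3 h4 h5
  apply h
  refine ⟨a, .cons hab (.cons hbc (.cons hcd (.cons hde (.cons hea .nil)))), ?_, rfl⟩
  have := hab.ne
  have := hbc.ne
  have := hcd.ne
  have := hde.ne
  have := hea.ne
  rw [SimpleGraph.Walk.cons_isCycle_iff]
  simp only [SimpleGraph.Walk.isPath_def, SimpleGraph.Walk.support_cons, SimpleGraph.Walk.support_nil,
    SimpleGraph.Walk.edges_cons, SimpleGraph.Walk.edges_nil]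
  constructor
  · simp only [List.nodup_cons, List.mem_cons, List.not_mem_nil, or_false, not_or]
    refine ⟨⟨?_, ?_, ?_, ?_⟩, ⟨?_, ?_, ?_⟩, ⟨?_, ?_⟩, ?_, ?_⟩ <;> tauto
  · simp only [List.mem_cons, List.not_mem_nil, or_false, not_or, Sym2.eq_iff]
    tauto

theorem charge {n : ℕ} {G : SimpleGraph (Fin n)} (h5 : No5 G) (u : Fin n) (A P : Finset (Fin n))
    (hA : ∀ v, v ∈ A ↔ G.Adj u v) (hP : ∀ v, v ∈ P ↔ v ∈ A ∧ cn G u v ≠ 0) :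
    ∑ a ∈ A, cn G u a ≤ 2 * P.card := by
  classical
  have key : ∀ a b, G.Adj u a → G.Adj u b → G.Adj a b → 2 ≤ cn G u b → cn G u a ≤ 2 := by
    intro a b ha hb hab h2
    obtain ⟨b', hb', hne⟩ := Finset.exists_mem_ne (s := Finset.univ.filter (fun v => G.Adj u v ∧ G.Adj b v)) h2 a
    simp only [Finset.mem_filter, Finset.mem_univ, true_and] at hb'
    have : (Finset.univ.filter (fun v => G.Adj u v ∧ G.Adj a v)) ⊆ {b, b'} := by
      intro a' ha'
      simp only [Finset.mem_filter, Finset.mem_univ, true_and] at ha'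
      simp only [Finset.mem_insert, Finset.mem_singleton]
      by_contra hc
      push Not at hc
      exact h5 u a' a b b' ha'.1 ha'.2.symm hab hb'.2 hb'.1.symm ha.ne hb.ne hc.1 hc.2 hne.symm
    exact (Finset.card_le_card this).trans Finset.card_le_two
  have pos : ∀ a b, G.Adj u b → G.Adj a b → 1 ≤ cn G u a := by
    intro a b hb hab
    exact Finset.card_pos.2 ⟨b, by simp [hb, hab]⟩
  have cnq : ∀ a, (cn G u a : ℚ) = ∑ b, (if G.Adj u b ∧ G.Adj a b then 1 else 0) := by
    intro a
    rw [Finset.sum_boole, cn]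
  have cnq2 : ∀ a, (cn G u a : ℚ) = ∑ b ∈ A, (if G.Adj a b then 1 else 0) := by
    intro a
    have hAf : A = Finset.univ.filter (fun v => G.Adj u v) := by ext v; simp [hA]
    rw [cnq, hAf, Finset.sum_filter]
    apply Finset.sum_congr rfl
    intro b _
    by_cases h : G.Adj u b <;> simp [h]
  have hq : ∀ a ∈ A, ∀ b ∈ A, (if G.Adj a b then (1 : ℚ) else 0) ≤
      (if G.Adj a b then 1 / (cn G u a : ℚ) else 0) + (if G.Adj b a then 1 / (cn G u b : ℚ) else 0) := by
    intro a ha b hb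
    rw [hA] at ha hb
    by_cases h : G.Adj a b
    · simp only [h, h.symm, if_true]
      have p1 := pos a b hb h
      have p2 := pos b a ha h.symm
      have hcase : cn G u a = 1 ∨ cn G u b = 1 ∨ (cn G u a = 2 ∧ cn G u b = 2) := by
        by_cases q1 : cn G u a = 1
        · exact Or.inl q1
        by_cases q2 : cn G u b = 1
        · exact Or.inr (Or.inl q2)
        have := key a b ha hb h (by omega)
        have := key b a hb ha h.symm (by omega)
        right; right; omega
      rcases hcase with h | h | ⟨h, h'⟩
      · rw [h]; simp
      · rw [h]; simp
      · rw [h, h']; norm_num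
    · have h' : ¬ G.Adj b a := fun h' => h h'.symm
      simp [h, h']
  have hone : ∀ a ∈ A, ∑ b ∈ A, (if G.Adj a b then 1 / (cn G u a : ℚ) else 0) = if a ∈ P then 1 else 0 := by
    intro a ha
    have : ∑ b ∈ A, (if G.Adj a b then 1 / (cn G u a : ℚ) else 0) = (cn G u a : ℚ) * (1 / (cn G u a : ℚ)) := by
      rw [cnq2 a, Finset.sum_mul]
      simp only [← cnq2 a]
      apply Finset.sum_congr rfl
      intro b _
      split_ifs <;> simp
    rw [this]
    by_cases h : cn G u a = 0
    · simp [hP, h]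
    · have h' : (cn G u a : ℚ) ≠ 0 := by exact_mod_cast h
      have : a ∈ P := (hP a).2 ⟨ha, h⟩
      simp only [this, if_true]
      field_simp
  have hPc : ∑ a ∈ A, (if a ∈ P then (1 : ℚ) else 0) = P.card := by
    rw [Finset.sum_boole]
    congr 2
    ext v
    simp only [Finset.mem_filter]
    exact ⟨fun h => h.2, fun h => ⟨((hP v).1 h).1, h⟩⟩
  have : ((∑ a ∈ A, cn G u a : ℕ) : ℚ) ≤ ((2 * P.card : ℕ) : ℚ) := by
    push_cast
    calc ∑ a ∈ A, (cn G u a : ℚ) = ∑ a ∈ A, ∑ b ∈ A, (if G.Adj a b then (1 : ℚ) else 0) :=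
          Finset.sum_congr rfl fun a _ => cnq2 a
      _ ≤ ∑ a ∈ A, ∑ b ∈ A, ((if G.Adj a b then 1 / (cn G u a : ℚ) else 0) +
            (if G.Adj b a then 1 / (cn G u b : ℚ) else 0)) :=
          Finset.sum_le_sum fun a ha => Finset.sum_le_sum fun b hb => hq a ha b hb
      _ = 2 * P.card := by
          simp only [Finset.sum_add_distrib]
          rw [Finset.sum_comm (f := fun a b => (if G.Adj b a then 1 / (cn G u b : ℚ) else 0))]
          rw [Finset.sum_congr rfl hone, hPc]
          ring
  exact_mod_cast this

theorem arith1 {m P t : ℤ} (hm : 19 ≤ m) (hP : m ^ 2 ≤ 4 * P + 1) : t * (m - 1 - t) + 9 ≤ P := by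
  nlinarith [sq_nonneg (m - 1 - 2 * t)]
theorem arith2 {m P t : ℤ} (hP : m ^ 2 ≤ 4 * P + 1) : t * (m - t) ≤ P := by
  have : 4 * (t * (m - t)) ≤ 4 * P + 1 := by nlinarith [sq_nonneg (m - 2 * t)]
  omega
theorem arith3 {m P : ℤ} (hm : 19 ≤ m) (hP : m ^ 2 ≤ 4 * P + 1) : 3 * (m + 2) ≤ P := by
  nlinarith

theorem sum_le_two {α : Type*} [DecidableEq α] (W : Finset α) (f : α → ℤ) (M : ℤ) (x y : α) (hx : x ∈ W) (hy : y ∈ W)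
    (hxy : x ≠ y) (h : ∀ w ∈ W, f w ≤ M) : ∑ w ∈ W, f w ≤ f x + f y + M * ((W.card : ℤ) - 2) := by
  have hy' : y ∈ W.erase x := Finset.mem_erase.2 ⟨hxy.symm, hy⟩
  rw [← Finset.add_sum_erase W f hx, ← Finset.add_sum_erase _ f hy']
  have h1 := Finset.sum_le_card_nsmul ((W.erase x).erase y) f M
    (fun w hw => h w (Finset.mem_of_mem_erase (Finset.mem_of_mem_erase hw)))
  have h2 : (((W.erase x).erase y).card : ℤ) = (W.card : ℤ) - 2 := by
    have c1 := Finset.card_erase_add_one hx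
    have c2 := Finset.card_erase_add_one hy'
    omega
  rw [nsmul_eq_mul, h2] at h1
  linarith [mul_comm M ((W.card : ℤ) - 2)]

theorem sum_le_one {α : Type*} [DecidableEq α] (W : Finset α) (f : α → ℤ) (M : ℤ) (x : α) (hx : x ∈ W)
    (h : ∀ w ∈ W, f w ≤ M) : ∑ w ∈ W, f w ≤ f x + M * ((W.card : ℤ) - 1) := by
  rw [← Finset.add_sum_erase W f hx]
  have h1 := Finset.sum_le_card_nsmul (W.erase x) f M
    (fun w hw => h w (Finset.mem_of_mem_erase hw))
  have h2 : ((W.erase x).card : ℤ) = (W.card : ℤ) - 1 := by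
    have c1 := Finset.card_erase_add_one hx
    omega
  rw [nsmul_eq_mul, h2] at h1
  linarith [mul_comm M ((W.card : ℤ) - 1)]

theorem sum_le_three {α : Type*} [DecidableEq α] (W : Finset α) (f : α → ℤ) (M : ℤ) (x y z : α) (hx : x ∈ W) (hy : y ∈ W)
    (hz : z ∈ W) (hxy : x ≠ y) (hxz : x ≠ z) (hyz : y ≠ z)
    (h : ∀ w ∈ W, f w ≤ M) : ∑ w ∈ W, f w ≤ f x + f y + f z + M * ((W.card : ℤ) - 3) := by
  rw [← Finset.add_sum_erase W f hx]
  have h1 := sum_le_two (W.erase x) f M y z (Finset.mem_erase.2 ⟨hxy.symm, hy⟩)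
    (Finset.mem_erase.2 ⟨hxz.symm, hz⟩) hyz (fun w hw => h w (Finset.mem_of_mem_erase hw))
  have h2 : ((W.erase x).card : ℤ) = (W.card : ℤ) - 1 := by
    have c1 := Finset.card_erase_add_one hx
    omega
  rw [h2] at h1
  have : M * ((W.card : ℤ) - 1 - 2) = M * ((W.card : ℤ) - 3) := by ring
  linarith

set_option maxHeartbeats 1000000 in
theorem comb {n : ℕ} (hn : 21 ≤ n) (G : SimpleGraph (Fin n)) (hnb : ¬ G.Colorable 2) (h5 : No5 G)
    (u : Fin n) (hsum : (n - 1) / 2 * ((n - 2) / 2) < ∑ w, cn G u w) : Str G := by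
  classical
  obtain ⟨m, hm⟩ : ∃ m : ℤ, m = n - 2 := ⟨_, rfl⟩
  obtain ⟨P, hPdef⟩ : ∃ P : ℤ, P = ((n - 1) / 2 * ((n - 2) / 2) : ℕ) := ⟨_, rfl⟩
  have hm19 : 19 ≤ m := by omega
  have hP : m ^ 2 ≤ 4 * P + 1 := by
    obtain ⟨k, hk⟩ : ∃ k, n = 2 * k + 2 ∨ n = 2 * k + 3 := ⟨(n - 2) / 2, by omega⟩
    rcases hk with rfl | rfl
    · have e1 : (2 * k + 2 - 1) / 2 = k := by omega
      have e2 : (2 * k + 2 - 2) / 2 = k := by omega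
      rw [e1, e2] at hPdef
      subst hm hPdef
      push_cast
      nlinarith
    · have e1 : (2 * k + 3 - 1) / 2 = k + 1 := by omega
      have e2 : (2 * k + 3 - 2) / 2 = k := by omega
      rw [e1, e2] at hPdef
      subst hm hPdef
      push_cast
      nlinarith
  have a1 := fun t => arith1 (t := t) hm19 hP
  have a2 := fun t => arith2 (t := t) hP
  have a3 := arith3 hm19 hP
  set A : Finset (Fin n) := Finset.univ.filter (fun v => G.Adj u v) with hAdef
  set W : Finset (Fin n) := Finset.univ.filter (fun v => ¬ G.Adj u v ∧ v ≠ u) with hWdef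
  have hA : ∀ v, v ∈ A ↔ G.Adj u v := by intro v; simp [hAdef]
  have hW : ∀ v, v ∈ W ↔ ¬ G.Adj u v ∧ v ≠ u := by intro v; simp [hWdef]
  set Q := A.filter (fun v => cn G u v ≠ 0) with hQdef
  set Z := A.filter (fun v => cn G u v = 0) with hZdef
  have hQ : ∀ v, v ∈ Q ↔ v ∈ A ∧ cn G u v ≠ 0 := by intro v; simp [hQdef]
  have hZ : ∀ v, v ∈ Z ↔ v ∈ A ∧ cn G u v = 0 := by intro v; simp [hZdef]
  -- splitting sums
  have hsplit : ∀ f : Fin n → ℤ, ∑ w, f w = f u + ∑ w ∈ A, f w + ∑ w ∈ W, f w := by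
    intro f
    have h1 := Finset.sum_filter_add_sum_filter_not Finset.univ (fun v => G.Adj u v) f
    rw [← h1, ← hAdef]
    have : Finset.univ.filter (fun v => ¬ G.Adj u v) = insert u W := by
      ext v
      by_cases hv : v = u
      · subst hv; simp
      · simp [hW, hv]
    rw [this, Finset.sum_insert (by simp [hW])]
    ring
  have hcards : 1 + (A.card : ℤ) + W.card = n := by
    have := hsplit (fun _ => 1)
    simp at this
    linarith
  have hAQZ : (A.card : ℤ) = Q.card + Z.card := by
    have := Finset.card_filter_add_card_filter_not (s := A) (fun v => cn G u v ≠ 0)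
    simp only [not_not] at this
    rw [← hQdef, ← hZdef] at this
    exact_mod_cast this.symm
  have cnu : cn G u u = A.card := by
    simp [cn, hAdef]
  have hS : P < (A.card : ℤ) + ∑ w ∈ A, (cn G u w : ℤ) + ∑ w ∈ W, (cn G u w : ℤ) := by
    rw [← cnu, ← hsplit (fun w => (cn G u w : ℤ)), hPdef]
    exact_mod_cast hsum
  have cnpos : ∀ w, cn G u w ≠ 0 → ∃ a, G.Adj u a ∧ G.Adj w a := by
    intro w hw
    obtain ⟨a, ha⟩ := Finset.card_pos.1 (Nat.pos_of_ne_zero hw)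
    simp only [Finset.mem_filter, Finset.mem_univ, true_and] at ha
    exact ⟨a, ha⟩
  have cnzero : ∀ w a, cn G u w = 0 → G.Adj u a → ¬ G.Adj w a := by
    intro w a hw hu ha
    have := Finset.card_eq_zero.1 hw
    have h2 : a ∈ Finset.univ.filter (fun v => G.Adj u v ∧ G.Adj w v) := by simp [hu, ha]
    rw [this] at h2
    simp at h2
  have cnsub : ∀ w (S : Finset (Fin n)), (∀ a, G.Adj u a → G.Adj w a → a ∈ S) → cn G u w ≤ S.card := by
    intro w S h
    apply Finset.card_le_card
    intro a ha
    simp only [Finset.mem_filter, Finset.mem_univ, true_and] at ha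
    exact h a ha.1 ha.2
  -- edges inside W
  have hWW : ∀ w ∈ W, ∀ w' ∈ W, G.Adj w w' → cn G u w ≠ 0 → cn G u w' ≠ 0 →
      ∃ a, G.Adj u a ∧ G.Adj w a ∧ G.Adj w' a ∧ (∀ b, G.Adj u b → G.Adj w b → b = a) ∧
        (∀ b, G.Adj u b → G.Adj w' b → b = a) := by
    intro w hw w' hw' hww h1 h2
    obtain ⟨a, ua, wa⟩ := cnpos w h1
    obtain ⟨a', ua', wa'⟩ := cnpos w' h2
    have F : ∀ b b', G.Adj u b → G.Adj w b → G.Adj u b' → G.Adj w' b' → b = b' := by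
      intro b b' ub wb ub' wb'
      by_contra hne
      exact h5 u b w w' b' ub wb.symm hww wb' ub'.symm ((hW w).1 hw).2.symm ((hW w').1 hw').2.symm
        (fun h => ((hW w').1 hw').1 (h ▸ ub)) hne (fun h => ((hW w).1 hw).1 (h ▸ ub'))
    obtain rfl := F a a' ua wa ua' wa'
    exact ⟨a, ua, wa, wa', fun b ub wb => F b a ub wb ua wa', fun b ub wb => (F a b ua wa ub wb).symm⟩
  have hQadj : ∀ a b, G.Adj u a → G.Adj u b → G.Adj a b → a ∈ Q := by
    intro a b ua ub hab
    refine (hQ a).2 ⟨(hA a).2 ua, fun h => cnzero a b h ub hab⟩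
  by_cases hs0 : Q = ∅
  · -- A independent
    have hAind : ∀ a b, G.Adj u a → G.Adj u b → ¬ G.Adj a b := by
      intro a b ua ub hab
      have := hQadj a b ua ub hab
      simp [hs0] at this
    have hAc : ∑ w ∈ A, (cn G u w : ℤ) = 0 := by
      apply Finset.sum_eq_zero
      intro w hw
      by_contra h
      have : w ∈ Q := (hQ w).2 ⟨hw, fun h' => h (by simp [h'])⟩
      simp [hs0] at this
    have hle : ∀ w ∈ W, (cn G u w : ℤ) ≤ A.card := by
      intro w _
      exact_mod_cast cnsub w A (fun a ua _ => (hA a).2 ua)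
    -- find a bad edge
    have hbad : ∃ w ∈ W, ∃ w' ∈ W, G.Adj w w' ∧ ((cn G u w = 0 ∧ cn G u w' = 0) ∨ (cn G u w ≠ 0 ∧ cn G u w' ≠ 0)) := by
      by_contra hc
      push Not at hc
      apply hnb
      have hcol : ∀ v w, G.Adj v w → (decide (v ∈ A ∨ (v ∈ W ∧ cn G u v = 0))) ≠ (decide (w ∈ A ∨ (w ∈ W ∧ cn G u w = 0))) := by
        intro v w hvw
        have tri : ∀ v, v = u ∨ v ∈ A ∨ v ∈ W := by
          intro v
          rw [hA, hW]; tauto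
        have huA : u ∉ A := by simp [hA]
        have huW : u ∉ W := by simp [hW]
        have hdisj : ∀ v, v ∈ A → v ∉ W := by intro v; rw [hA, hW]; tauto
        simp only [ne_eq, decide_eq_decide]
        rcases tri v with rfl | hv | hv <;> rcases tri w with rfl | hw | hw
        · exact absurd hvw (G.irrefl)
        · simp [huA, huW, hw]
        · exact absurd hvw ((hW w).1 hw).1
        · simp [huA, huW, hv]
        · exact absurd hvw (hAind v w ((hA v).1 hv) ((hA w).1 hw))
        · have : cn G u w ≠ 0 := fun h => cnzero w v h ((hA v).1 hv) hvw.symm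
          have h2 : w ∉ A := fun h => hdisj w h hw
          simp [hv, this, h2]
        · exact absurd hvw.symm ((hW v).1 hv).1
        · have : cn G u v ≠ 0 := fun h => cnzero v w h ((hA w).1 hw) hvw
          have h2 : v ∉ A := fun h => hdisj v h hv
          simp [hw, this, h2]
        · have h1 : w ∉ A := fun h => hdisj w h hw
          have h2 : v ∉ A := fun h => hdisj v h hv
          have := hc v hv w hw hvw
          simp only [h1, h2, hv, hw, false_or, true_and]
          tauto
      have := (SimpleGraph.Coloring.mk (G := G) (fun v => decide (v ∈ A ∨ (v ∈ W ∧ cn G u v = 0)))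
        (fun {v w} h => hcol v w h)).colorable
      simpa using this
    obtain ⟨y1, hy1, y2, hy2, hyy, hzz | ⟨hc1, hc2⟩⟩ := hbad
    · exfalso
      have := sum_le_two W (fun w => (cn G u w : ℤ)) A.card y1 y2 hy1 hy2 hyy.ne hle
      simp only [hzz.1, hzz.2] at this
      have := a2 A.card
      have e : (A.card : ℤ) * (m - A.card) = A.card + A.card * ((W.card : ℤ) - 2) := by
        have : (W.card : ℤ) = m + 1 - A.card := by omega
        rw [this]; ring
      push_cast at *
      linarith
    · obtain ⟨a, ua, y1a, y2a, ha1, ha2⟩ := hWW y1 hy1 y2 hy2 hyy hc1 hc2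
      have c1 : cn G u y1 ≤ 1 := by
        simpa using cnsub y1 {a} (fun b ub wb => by simp [ha1 b ub wb])
      have c2 : cn G u y2 ≤ 1 := by
        simpa using cnsub y2 {a} (fun b ub wb => by simp [ha2 b ub wb])
      have hthird : ∀ w ∈ W, w ≠ y1 → w ≠ y2 → 2 ≤ cn G u w := by
        intro w hw h1 h2
        by_contra hlt
        push Not at hlt
        have := sum_le_three W (fun w => (cn G u w : ℤ)) A.card y1 y2 w hy1 hy2 hw hyy.ne h1.symm h2.symm hle
        have := a1 A.card
        have e : (A.card : ℤ) * (m - 1 - A.card) = A.card + A.card * ((W.card : ℤ) - 3) := by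
          have : (W.card : ℤ) = m + 1 - A.card := by omega
          rw [this]; ring
        have : (cn G u y1 : ℤ) ≤ 1 := by exact_mod_cast c1
        have : (cn G u y2 : ℤ) ≤ 1 := by exact_mod_cast c2
        have : (cn G u w : ℤ) ≤ 1 := by omega
        linarith
      have hWno : ∀ w ∈ W, ∀ w' ∈ W, w ≠ y1 → w ≠ y2 → ¬ G.Adj w w' := by
        intro w hw w' hw' h1 h2 hadj
        have hw2 := hthird w hw h1 h2
        have hw0 : cn G u w' ≠ 0 := by
          by_cases e1 : w' = y1
          · rw [e1]; exact hc1
          by_cases e2 : w' = y2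
          · rw [e2]; exact hc2
          have := hthird w' hw' e1 e2
          omega
        obtain ⟨a', -, -, -, hh, -⟩ := hWW w hw w' hw' hadj (by omega) hw0
        have : cn G u w ≤ 1 := by
          simpa using cnsub w {a'} (fun b ub wb => by simp [hh b ub wb])
        omega
      have hy1' := (hW y1).1 hy1
      have hy2' := (hW y2).1 hy2
      have hay1 : a ≠ y1 := fun h => hy1'.1 (h ▸ ua)
      have hay2 : a ≠ y2 := fun h => hy2'.1 (h ▸ ua)
      refine ⟨Finset.univ.filter (fun v => ¬ G.Adj u v ∧ v ≠ y1 ∧ v ≠ y2), a, y1, y2,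
        ⟨u, by simp [hy1'.2.symm, hy2'.2.symm]⟩, hay1, hay2, hyy.ne, by simp [ua], by simp, by simp, ?_⟩
      -- a vertex y ∈ {y1,y2}: neighbours
      have hyN : ∀ y w, (y = y1 ∨ y = y2) → G.Adj y w → w = a ∨ w = y1 ∨ w = y2 := by
        intro y w hy hadj
        have hyW : y ∈ W := by rcases hy with rfl | rfl <;> assumption
        by_cases uw : G.Adj u w
        · left
          rcases hy with rfl | rfl
          · exact ha1 w uw hadj
          · exact ha2 w uw hadj
        · by_cases hwu : w = u
          · subst hwu; exact absurd hadj.symm ((hW y).1 hyW).1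
          · by_contra hc
            push Not at hc
            exact hWno w ((hW w).2 ⟨uw, hwu⟩) y hyW hc.2.1 hc.2.2 hadj.symm
      intro v w hvw
      simp only [Finset.mem_filter, Finset.mem_univ, true_and]
      by_cases hv : v = y1 ∨ v = y2
      · have := hyN v w hv hvw
        right; right
        tauto
      by_cases hw : w = y1 ∨ w = y2
      · have := hyN w v hw hvw.symm
        right; right
        tauto
      push Not at hv hw
      by_cases uv : G.Adj u v <;> by_cases uw : G.Adj u w
      · exact absurd hvw (hAind v w uv uw)
      · right; left; tauto
      · left; tauto
      · exfalso
        by_cases hvu : v = u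
        · subst hvu; exact uw hvw
        by_cases hwu : w = u
        · subst hwu; exact uv hvw.symm
        exact hWno v ((hW v).2 ⟨uv, hvu⟩) w ((hW w).2 ⟨uw, hwu⟩) hv.1 hv.2 hvw
  · -- Q nonempty
    obtain ⟨p, hp⟩ := Finset.nonempty_iff_ne_empty.2 hs0
    have up := (hA p).1 ((hQ p).1 hp).1
    obtain ⟨q, uq, hpq⟩ := cnpos p ((hQ p).1 hp).2
    have hq : q ∈ Q := hQadj q p uq up hpq.symm
    have htouch : ∀ w ∈ W, ∀ b ∈ Q, G.Adj w b → cn G u w ≤ 2 := by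
      intro w hw b hb hwb
      have ub := (hA b).1 ((hQ b).1 hb).1
      obtain ⟨a, ua, hba⟩ := cnpos b ((hQ b).1 hb).2
      refine (cnsub w {a, b} ?_).trans Finset.card_le_two
      intro c uc wc
      simp only [Finset.mem_insert, Finset.mem_singleton]
      by_contra hc
      push Not at hc
      exact h5 u a b w c ua hba.symm hwb.symm wc uc.symm ub.ne ((hW w).1 hw).2.symm
        (fun h => ((hW w).1 hw).1 (h ▸ ua)) hc.1.symm hc.2.symm
    have hnot : ∀ w ∈ W, (∀ b ∈ Q, ¬ G.Adj w b) → cn G u w ≤ Z.card := by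
      intro w hw h
      apply cnsub
      intro a ua wa
      rw [hZ]
      refine ⟨(hA a).2 ua, ?_⟩
      by_contra h0
      exact h a ((hQ a).2 ⟨(hA a).2 ua, h0⟩) wa
    obtain ⟨t, ht⟩ : ∃ t : ℤ, t = Z.card := ⟨_, rfl⟩
    obtain ⟨s, hs⟩ : ∃ s : ℤ, s = Q.card := ⟨_, rfl⟩
    obtain ⟨M, hM⟩ : ∃ M : ℤ, M = max 2 t := ⟨_, rfl⟩
    have hle : ∀ w ∈ W, (cn G u w : ℤ) ≤ M := by
      intro w hw
      by_cases h : ∀ b ∈ Q, ¬ G.Adj w b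
      · have := hnot w hw h
        omega
      · push Not at h
        obtain ⟨b, hb, hwb⟩ := h
        have := htouch w hw b hb hwb
        omega
    have hWc : (W.card : ℤ) = m + 1 - t - s := by omega
    have ht0 : 0 ≤ t := by omega
    have hW0 : (0 : ℤ) ≤ W.card := by omega
    have hs2 : 2 ≤ s := by
      have : ({p, q} : Finset (Fin n)) ⊆ Q := by
        intro v hv
        simp only [Finset.mem_insert, Finset.mem_singleton] at hv
        rcases hv with rfl | rfl <;> assumption
      have := Finset.card_le_card this
      rw [Finset.card_pair hpq.ne] at this
      omega
    have hcharge : ∑ w ∈ A, (cn G u w : ℤ) ≤ 2 * s := by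
      have := charge h5 u A Q hA hQ
      rw [hs]
      exact_mod_cast this
    rw [hAQZ, ← hs, ← ht] at hS
    by_cases hs3 : 3 ≤ s
    · exfalso
      have h1 : ∑ w ∈ W, (cn G u w : ℤ) ≤ M * W.card := by
        have := Finset.sum_le_card_nsmul W (fun w => (cn G u w : ℤ)) M hle
        rw [nsmul_eq_mul] at this
        linarith [mul_comm M (W.card : ℤ)]
      rw [hWc] at h1 hW0
      rcases le_or_gt t 2 with h | h
      · have : M = 2 := by omega
        rw [this] at h1
        linarith
      · have : M = t := by omega
        rw [this] at h1
        have k := a1 t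
        have k2 : 0 ≤ (t - 3) * (s - 3) := mul_nonneg (by omega) (by omega)
        have k3 : (t - 3) * (s - 3) = t * (m - 1 - t) + 9 - t * (m + 1 - t - s) - t - 3 * s := by ring
        linarith
    have hs2 : s = 2 := by omega
    have hQpq : ∀ v, v ∈ Q ↔ v = p ∨ v = q := by
      have hsub : ({p, q} : Finset (Fin n)) = Q := by
        apply Finset.eq_of_subset_of_card_le
        · intro v hv
          simp only [Finset.mem_insert, Finset.mem_singleton] at hv
          rcases hv with rfl | rfl <;> assumption
        · rw [Finset.card_pair hpq.ne]; omega
      intro v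
      rw [← hsub]; simp
    have hAsum : ∑ w ∈ A, (cn G u w : ℤ) ≤ 2 := by
      have hp1 : cn G u p ≤ 1 := by
        simpa using cnsub p {q} (fun b ub pb => by
          rcases (hQpq b).1 (hQadj b p ub up pb.symm) with rfl | rfl
          · exact absurd pb G.irrefl
          · simp)
      have hq1 : cn G u q ≤ 1 := by
        simpa using cnsub q {p} (fun b ub pb => by
          rcases (hQpq b).1 (hQadj b q ub uq pb.symm) with rfl | rfl
          · simp
          · exact absurd pb G.irrefl)
      have := sum_le_two A (fun w => if w = p ∨ w = q then (cn G u w : ℤ) else 0) 0 p q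
      have hz : ∑ w ∈ A, (cn G u w : ℤ) = ∑ w ∈ Q, (cn G u w : ℤ) := by
        symm
        apply Finset.sum_subset (Finset.filter_subset _ _)
        intro v hv hvQ
        by_contra h
        exact hvQ ((hQ v).2 ⟨hv, fun h' => h (by simp [h'])⟩)
      have h1 := Finset.sum_le_card_nsmul Q (fun w => (cn G u w : ℤ)) 1 (by
        intro w hw
        rcases (hQpq w).1 hw with rfl | rfl
        · exact_mod_cast hp1
        · exact_mod_cast hq1)
      rw [hz]
      rw [nsmul_eq_mul, ← hs, hs2] at h1
      linarith
    subst hs2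
    -- no vertex of W touches Q
    have hW1 : ∀ w ∈ W, ∀ b ∈ Q, ¬ G.Adj w b := by
      intro w hw b hb hwb
      have h2 := htouch w hw b hb hwb
      have h2' : (cn G u w : ℤ) ≤ 2 := by exact_mod_cast h2
      have h1 := sum_le_one W (fun w => (cn G u w : ℤ)) M w hw hle
      rw [hWc] at h1
      rcases le_or_gt t 2 with h | h
      · have : M = 2 := by omega
        rw [this] at h1
        linarith
      · have : M = t := by omega
        rw [this] at h1
        have k := a1 t
        have k3 : t * (m - 1 - t) = t * (m + 1 - t - 2 - 1) + t := by ring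
        linarith
    have hle2 : ∀ w ∈ W, (cn G u w : ℤ) ≤ t := by
      intro w hw
      have := hnot w hw (hW1 w hw)
      omega
    have hWind : ∀ w ∈ W, ∀ w' ∈ W, ¬ G.Adj w w' := by
      intro w hw w' hw' hadj
      have hsum2 : (cn G u w : ℤ) + cn G u w' ≤ t + 2 := by
        have l1 := hle2 w hw
        have l2 := hle2 w' hw'
        by_cases z1 : cn G u w = 0
        · omega
        by_cases z2 : cn G u w' = 0
        · omega
        obtain ⟨a, -, -, -, k1, k2⟩ := hWW w hw w' hw' hadj z1 z2
        have c1 : cn G u w ≤ 1 := by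
          simpa using cnsub w {a} (fun b ub wb => by simp [k1 b ub wb])
        omega
      have h1 := sum_le_two W (fun w => (cn G u w : ℤ)) t w w' hw hw' hadj.ne hle2
      rw [hWc] at h1
      have k := a1 t
      have k3 : t * (m - 1 - t) = t * (m + 1 - t - 2 - 2) + 2 * t := by ring
      linarith
    have htpos : Z.Nonempty := by
      rw [← Finset.card_pos]
      by_contra hc
      have t0 : t = 0 := by omega
      have : ∑ w ∈ W, (cn G u w : ℤ) ≤ 0 := by
        apply Finset.sum_nonpos
        intro w hw
        have := hle2 w hw
        omega
      linarith
    have hpZ : p ∉ Z := fun h => ((hQ p).1 hp).2 ((hZ p).1 h).2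
    have hqZ : q ∉ Z := fun h => ((hQ q).1 hq).2 ((hZ q).1 h).2
    refine ⟨Z, u, p, q, htpos, up.ne, uq.ne, hpq.ne, by simp [hZ, hA], hpZ, hqZ, ?_⟩
    have hN : ∀ y w, y ∈ Q → G.Adj y w → w = u ∨ w = p ∨ w = q := by
      intro y w hy hadj
      by_cases hwu : w = u
      · exact Or.inl hwu
      right
      by_cases uw : G.Adj u w
      · exact (hQpq w).1 (hQadj w y uw ((hA y).1 ((hQ y).1 hy).1) hadj.symm)
      · exact absurd hadj.symm (hW1 w ((hW w).2 ⟨uw, hwu⟩) y hy)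
    have hclass : ∀ v, v ∉ Q → v ∉ Z → v = u ∨ v ∈ W := by
      intro v h1 h2
      rw [hW]
      by_cases uv : G.Adj u v
      · exfalso
        have hvA := (hA v).2 uv
        by_cases h : cn G u v = 0
        · exact h2 ((hZ v).2 ⟨hvA, h⟩)
        · exact h1 ((hQ v).2 ⟨hvA, h⟩)
      · tauto
    intro v w hvw
    by_cases hv : v ∈ Q
    · have := hN v w hv hvw
      have := (hQpq v).1 hv
      right; right; tauto
    by_cases hw : w ∈ Q
    · have := hN w v hw hvw.symm
      have := (hQpq w).1 hw
      right; right; tauto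
    have hv' : v ≠ p ∧ v ≠ q := by
      constructor
      · rintro rfl; exact hv hp
      · rintro rfl; exact hv hq
    have hw' : w ≠ p ∧ w ≠ q := by
      constructor
      · rintro rfl; exact hw hp
      · rintro rfl; exact hw hq
    by_cases vZ : v ∈ Z <;> by_cases wZ : w ∈ Z
    · exact absurd hvw (cnzero v w ((hZ v).1 vZ).2 ((hA w).1 ((hZ w).1 wZ).1))
    · exact Or.inl ⟨vZ, wZ, hw'⟩
    · exact Or.inr (Or.inl ⟨wZ, vZ, hv'⟩)
    · exfalso
      rcases hclass v hv vZ with rfl | h1 <;> rcases hclass w hw wZ with rfl | h2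
      · exact G.irrefl hvw
      · exact ((hW w).1 h2).1 hvw
      · exact ((hW v).1 h1).1 hvw.symm
      · exact hWind v h1 w h2 hvw

theorem stmt13 (n : ℕ) (hn : 21 ≤ n) (G : SimpleGraph (Fin n)) (hnb : ¬ G.Colorable 2)
    (hρ : specRad (KdotK3 ((n - 1) / 2) ((n - 2) / 2) (by omega)) ≤ specRad G) :
    (∃ (v : Fin n) (c : G.Walk v v), c.IsCycle ∧ c.length = 5) ∨
    Nonempty (G ≃g KdotK3 ((n - 1) / 2) ((n - 2) / 2) (by omega)) := by
  by_cases h : ∃ (v : Fin n) (c : G.Walk v v), c.IsCycle ∧ c.length = 5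
  · exact Or.inl h
  right
  have h0 : 0 < (n - 2) / 2 := by omega
  have h1 : 0 < (n - 1) / 2 := by omega
  have : Nonempty (Fin n) := ⟨⟨0, by omega⟩⟩
  have : Nonempty (Fin ((n - 2) / 2)) := ⟨⟨0, h0⟩⟩
  obtain ⟨x, hx⟩ := perron_exists G
  obtain ⟨z, hz⟩ := perron_exists (KdotK3 ((n - 1) / 2) ((n - 2) / 2) h0)
  obtain ⟨s0, s1, -⟩ := K_eq h1 h0 hz
  obtain ⟨u, hu⟩ := hx.sq_le
  refine (comb hn G hnb (no5_of h) u ?_).final hn h0 hρ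
  have h2 : (specRad (KdotK3 ((n - 1) / 2) ((n - 2) / 2) h0)) ^ 2 ≤ specRad G ^ 2 :=
    pow_le_pow_left₀ s0.le hρ 2
  have := s1.trans_le (h2.trans hu)
  exact_mod_cast this
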